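/- Let n ∈ ℕ and let Zₙ(s) := Σ'_{k∈ℤⁿ} |k|^{−s} (convergent for Re(s) > n). Then Zₙ extends meromorphically to ℂ with a single pole, which is simple and located at s = n, with residue Res_{s=n} Zₙ(s) = 2π^{n/2} / Γ(n/2); moreover the value of the continuation at 0 is Zₙ(0) = −1. -/

import Mathlib

open Filter Topology

noncomputable section

/-- Euclidean norm of an integer vector `k ∈ ℤⁿ`. -/
def znorm {n : ℕ} (k : Fin n → ℤ) : ℝ := Real.sqrt (∑ i, ((k i : ℝ)) ^ 2)

/-!
The theta series `∑_{k ∈ ℤⁿ} exp (-π |k|² t)` factors as the `n`-th power of the one-dimensional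
Jacobi theta function, so it inherits from it a functional equation `t ↦ 1 / t` of weight `n / 2`.
Its Mellin transform at `s / 2` is therefore meromorphic with poles only at `s = 0` and `s = n`,
and for `n < re s` it equals `Γ_ℝ(s) Zₙ(s)`. Since `1 / Γ_ℝ` is entire and vanishes at `0`, dividing
by `Γ_ℝ` removes the pole at `0` (where `-2 / s`, the contribution of `k = 0`, leaves the value
`-1`), so that only the pole at `n` survives.
-/

section LFunction

open Complex

variable {E : Type*} [NormedAddCommGroup E] [NormedSpace ℂ E] (P : WeakFEPair E)

/-- The L-function attached to a weak functional equation pair, normalised as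
`Γ_ℝ(s)⁻¹ Λ(s / 2)`. The two polar terms of `Λ` are separated, and `2 / (s Γ_ℝ(s))` is written as
`(π Γ_ℝ(s + 2))⁻¹`, so that the formula also gives the right value at the removable singularity
`s = 0`. -/
def lFunctionOfFEPair (s : ℂ) : E :=
  (Gammaℝ s)⁻¹ • (P.Λ₀ (s / 2) + (2 * P.ε / (s - 2 * P.k)) • P.g₀)
    - (Real.pi * Gammaℝ (s + 2))⁻¹ • P.f₀

theorem lFunctionOfFEPair_zero : lFunctionOfFEPair P 0 = -P.f₀ := by
  have hΓ₀ : Gammaℝ 0 = 0 := Gammaℝ_eq_zero_iff.mpr ⟨0, by simp⟩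
  have hΓ₂ : Real.pi * Gammaℝ 2 = 1 := by
    simp [Gammaℝ_def, cpow_neg_one]
  rw [lFunctionOfFEPair, zero_add, hΓ₀, hΓ₂, inv_zero, inv_one, zero_smul, one_smul, zero_sub]

theorem lFunctionOfFEPair_eq_inv_Gammaℝ_smul_Λ {s : ℂ} (hs : s ≠ 0) :
    lFunctionOfFEPair P s = (Gammaℝ s)⁻¹ • P.Λ (s / 2) := by
  have pole_zero : (Real.pi * Gammaℝ (s + 2))⁻¹ = (Gammaℝ s)⁻¹ * (1 / (s / 2)) := by
    rw [Gammaℝ_add_two hs]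
    field
  have pole_weight : 2 * P.ε / (s - 2 * P.k) = -(P.ε / (P.k - s / 2)) := by
    rw [← div_neg, ← mul_div_mul_left P.ε _ two_ne_zero]
    ring
  rw [lFunctionOfFEPair, WeakFEPair.Λ, pole_zero, pole_weight]
  module

theorem differentiableAt_lFunctionOfFEPair {s : ℂ} (hs : s ≠ 2 * P.k) :
    DifferentiableAt ℂ (lFunctionOfFEPair P) s := by
  have inv_Gammaℝ : Differentiable ℂ fun s : ℂ => (Gammaℝ s)⁻¹ := differentiable_Gammaℝ_inv
  have inv_pi_mul_Gammaℝ : Differentiable ℂ fun s : ℂ => (Real.pi * Gammaℝ (s + 2))⁻¹ := by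
    simp only [mul_inv]
    exact (inv_Gammaℝ.comp (differentiable_id.add_const 2)).const_mul _
  have entire_part : Differentiable ℂ fun s : ℂ => P.Λ₀ (s / 2) :=
    P.differentiable_Λ₀.comp (differentiable_id.div_const 2)
  have polar_part : DifferentiableAt ℂ (fun s : ℂ => 2 * P.ε / (s - 2 * P.k)) s := by
    have := sub_ne_zero.mpr hs
    fun_prop (disch := assumption)
  exact ((inv_Gammaℝ s).smul ((entire_part s).add (polar_part.smul_const _))).sub
    ((inv_pi_mul_Gammaℝ s).smul_const _)

theorem tendsto_sub_smul_lFunctionOfFEPair :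
    Tendsto (fun s : ℂ => (s - 2 * P.k) • lFunctionOfFEPair P s) (𝓝[≠] (2 * P.k))
      (𝓝 ((2 * P.ε / Gammaℝ (2 * P.k)) • P.g₀)) := by
  have halve : Tendsto (fun s : ℂ => s / 2) (𝓝[≠] (2 * P.k)) (𝓝[≠] P.k) := by
    have inj : Function.Injective fun s : ℂ => s / 2 := fun _ _ => (div_left_inj' two_ne_zero).mp
    have lim : Tendsto (fun s : ℂ => s / 2) (𝓝[≠] (2 * P.k)) (𝓝[≠] (2 * P.k / 2)) :=
      (continuous_id.div_const 2).continuousWithinAt.tendsto_nhdsWithin fun s hs => inj.ne hs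
    rwa [mul_div_cancel_left₀ _ two_ne_zero] at lim
  have inv_Gammaℝ : Tendsto (fun s : ℂ => 2 * (Gammaℝ s)⁻¹) (𝓝[≠] (2 * P.k))
      (𝓝 (2 * (Gammaℝ (2 * P.k))⁻¹)) :=
    ((differentiable_Gammaℝ_inv.continuous.tendsto _).mono_left nhdsWithin_le_nhds).const_mul 2
  have lim := inv_Gammaℝ.smul (P.Λ_residue_k.comp halve)
  rw [smul_smul, mul_right_comm, ← div_eq_mul_inv] at lim
  refine lim.congr' ?_
  have weight_ne_zero : (2 * P.k : ℂ) ≠ 0 := by simp [P.hk.ne']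
  filter_upwards [(eventually_ne_nhds weight_ne_zero).filter_mono nhdsWithin_le_nhds] with s hs
  rw [lFunctionOfFEPair_eq_inv_Gammaℝ_smul_Λ P hs]
  dsimp only [Function.comp_apply]
  module

theorem hasSum_lFunctionOfFEPair {ι : Type*} [Countable ι] (P : WeakFEPair ℂ) {a : ι → ℂ}
    {r : ι → ℝ} {s : ℂ} (hs : 2 * P.k < s.re)
    (hf : ∀ t ∈ Set.Ioi (0 : ℝ), HasSum
      (fun i => if r i = 0 then 0 else a i * Real.exp (-Real.pi * r i ^ 2 * t)) (P.f t - P.f₀))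
    (h_sum : Summable fun i => ‖a i‖ / |r i| ^ s.re) :
    HasSum (fun i => a i / |r i| ^ s) (lFunctionOfFEPair P s) := by
  have re_pos : 0 < s.re := by linarith [P.hk]
  have hs₀ : s ≠ 0 := by
    rintro rfl
    exact re_pos.ne' zero_re
  have re_half : P.k < (s / 2).re := by
    rw [div_ofNat_re]
    linarith
  have mellin_sum := hasSum_mellin_pi_mul_sq re_pos hf h_sum
  rw [(P.hasMellin re_half).2] at mellin_sum
  rw [lFunctionOfFEPair_eq_inv_Gammaℝ_smul_Λ P hs₀]
  convert! mellin_sum.const_smul (Gammaℝ s)⁻¹ using 2 with i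
  rw [smul_eq_mul, mul_div_assoc, inv_mul_cancel_left₀ (Gammaℝ_ne_zero_of_re_pos re_pos)]

end LFunction

section Power

open Asymptotics

theorem isBigO_rpow_pow_sub_pow {𝕜 : Type*} [NontriviallyNormedField 𝕜] {f : ℝ → 𝕜} {a : 𝕜}
    (hf : ∀ r : ℝ, (f · - a) =O[atTop] (· ^ r)) (n : ℕ) (r : ℝ) :
    (fun x => f x ^ n - a ^ n) =O[atTop] (fun x : ℝ => x ^ r) := by
  have lim : Tendsto f atTop (𝓝 a) :=
    tendsto_sub_nhds_zero_iff.mp ((hf (-1)).trans_tendsto (tendsto_rpow_neg_atTop one_pos))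
  exact ((hasDerivAt_pow n a).isBigO_sub.comp_tendsto lim).trans (hf r)

/-- The `n`-th power of a weak functional equation pair with continuous components. -/
def powFEPair (P : WeakFEPair ℂ) (hf : ContinuousOn P.f (Set.Ioi 0))
    (hg : ContinuousOn P.g (Set.Ioi 0)) (n : ℕ) [NeZero n] : WeakFEPair ℂ where
  f x := P.f x ^ n
  g x := P.g x ^ n
  k := P.k * n
  ε := P.ε ^ n
  f₀ := P.f₀ ^ n
  g₀ := P.g₀ ^ n
  hf_int := (hf.pow n).locallyIntegrableOn measurableSet_Ioi
  hg_int := (hg.pow n).locallyIntegrableOn measurableSet_Ioi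
  hk := mul_pos P.hk (Nat.cast_pos.mpr (NeZero.pos n))
  hε := pow_ne_zero n P.hε
  h_feq x hx := by
    rw [P.h_feq x hx, smul_pow, mul_pow, ← Complex.ofReal_pow, Real.rpow_mul_natCast (le_of_lt hx)]
  hf_top r := isBigO_rpow_pow_sub_pow P.hf_top n r
  hg_top r := isBigO_rpow_pow_sub_pow P.hg_top n r

end Power

section Sums

theorem summable_norm_and_hasSum_pi_prod {ι R : Type*} [hι : Fintype ι] [NormedCommRing R]
    [CompleteSpace R] {α : ι → Type*} {f : ∀ i, α i → R} {a : ι → R}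
    (hf : ∀ i, Summable fun x => ‖f i x‖) (ha : ∀ i, HasSum (f i) (a i)) :
    (Summable fun k : ∀ i, α i => ‖∏ i, f i (k i)‖) ∧
      HasSum (fun k : ∀ i, α i => ∏ i, f i (k i)) (∏ i, a i) := by
  revert α a
  refine @(Fintype.induction_empty_option ?of_equiv ?h_empty ?h_option ι (h_fintype := hι))
  case of_equiv =>
    intro ι κ _ e ih α f a hf ha
    let := Fintype.ofEquiv κ e.symm
    have h := ih (fun i => hf (e i)) (fun i => ha (e i))
    rw [← (Equiv.piCongrLeft α e).summable_iff, ← (Equiv.piCongrLeft α e).hasSum_iff]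
    simpa only [Function.comp_def, ← e.prod_comp, Equiv.piCongrLeft_apply_apply] using h
  case h_empty =>
    intros
    simp only [Finset.univ_eq_empty, Finset.prod_empty]
    exact ⟨Summable.of_finite, hasSum_unique _⟩
  case h_option =>
    intro ι _ ih α f a hf ha
    obtain ⟨ih_summable, ih_hasSum⟩ := ih (fun i => hf (some i)) (fun i => ha (some i))
    let e : α none × (∀ i, α (some i)) ≃ ∀ i, α i := Equiv.piOptionEquivProd.symm
    have prod_e (x : α none × ∀ i, α (some i)) :
        ∏ i, f i (e x i) = f none x.1 * ∏ i, f (some i) (x.2 i) := Fintype.prod_option _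
    have prod_a : ∏ i, a i = a none * ∏ i, a (some i) := Fintype.prod_option _
    rw [← e.summable_iff, ← e.hasSum_iff, prod_a]
    simp only [Function.comp_def, prod_e]
    have summable_norm := (hf none).mul_norm ih_summable
    have summable := summable_mul_of_summable_norm (hf none) ih_summable
    have hasSum := (ha none).mul ih_hasSum summable
    exact ⟨summable_norm, hasSum⟩

theorem summable_norm_basis_sum_rpow {ι E : Type*} [Fintype ι] [NormedAddCommGroup E]
    [NormedSpace ℝ E] (b : Module.Basis ι ℝ E) {r : ℝ} (hr : r < -Fintype.card ι) :
    Summable fun k : ι → ℤ => ‖∑ i, k i • b i‖ ^ r := by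
  let L := Submodule.span ℤ (Set.range b)
  let bL : Module.Basis ι ℤ L := b.restrictScalars ℤ
  have : FiniteDimensional ℝ E := b.finiteDimensional_of_finite
  have rank_L : Module.finrank ℤ L = Fintype.card ι := Module.finrank_eq_card_basis bL
  have h := ZLattice.summable_norm_rpow L r (by rwa [rank_L])
  refine (h.comp_injective bL.equivFun.symm.injective).congr fun k => ?_
  simp [bL, L, Module.Basis.restrictScalars_apply]

theorem znorm_nonneg {n : ℕ} (k : Fin n → ℤ) : 0 ≤ znorm k := Real.sqrt_nonneg _

theorem znorm_eq_norm_toLp {n : ℕ} (k : Fin n → ℤ) :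
    znorm k = ‖WithLp.toLp 2 fun i => (k i : ℝ)‖ := by
  simp [znorm, EuclideanSpace.norm_eq]

theorem znorm_eq_zero {n : ℕ} {k : Fin n → ℤ} : znorm k = 0 ↔ k = 0 := by
  simp [znorm_eq_norm_toLp, funext_iff]

theorem summable_znorm_rpow {n : ℕ} {r : ℝ} (hr : r < -n) :
    Summable fun k : Fin n → ℤ => znorm k ^ r := by
  have h := summable_norm_basis_sum_rpow (EuclideanSpace.basisFun (Fin n) ℝ).toBasis
    (r := r) (by simpa)
  refine h.congr fun k => ?_
  rw [znorm_eq_norm_toLp]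
  congr 2
  ext i
  simp [Pi.single_apply]

theorem hasSum_exp_neg_pi_mul_znorm_sq (n : ℕ) {t : ℝ} (ht : 0 < t) :
    HasSum (fun k : Fin n → ℤ => Real.exp (-Real.pi * znorm k ^ 2 * t))
      (HurwitzZeta.evenKernel 0 t ^ n) := by
  have theta := HurwitzZeta.hasSum_int_evenKernel 0 ht
  have theta_pow := (summable_norm_and_hasSum_pi_prod (fun _ : Fin n => theta.summable.norm)
    (fun _ => theta)).2
  rw [Fin.prod_const] at theta_pow
  refine theta_pow.congr_fun fun k => ?_
  rw [znorm, Real.sq_sqrt (by positivity), ← Real.exp_sum, Finset.mul_sum, Finset.sum_mul]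
  simp only [add_zero]

end Sums

section Epstein

/-- The functional equation pair of the theta series `∑_{k ∈ ℤⁿ} exp (-π |k|² t)`, obtained as the
`n`-th power of the pair of the Jacobi theta function. -/
def thetaFEPair (n : ℕ) [NeZero n] : WeakFEPair ℂ :=
  powFEPair (HurwitzZeta.hurwitzEvenFEPair 0)
    (Complex.continuous_ofReal.comp_continuousOn (HurwitzZeta.continuousOn_evenKernel 0))
    (Complex.continuous_ofReal.comp_continuousOn (HurwitzZeta.continuousOn_cosKernel 0)) n

/-- The meromorphic continuation of the Epstein zeta function `Zₙ`. -/
def epsteinZeta (n : ℕ) [NeZero n] : ℂ → ℂ :=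
  lFunctionOfFEPair (thetaFEPair n)

variable (n : ℕ) [NeZero n]

theorem thetaFEPair_f {t : ℝ} :
    (thetaFEPair n).f t = (HurwitzZeta.evenKernel 0 t : ℂ) ^ n := rfl

theorem thetaFEPair_k : (thetaFEPair n).k = n / 2 := by
  simp [thetaFEPair, powFEPair, HurwitzZeta.hurwitzEvenFEPair, inv_mul_eq_div]

theorem thetaFEPair_ε : (thetaFEPair n).ε = 1 := by
  simp [thetaFEPair, powFEPair, HurwitzZeta.hurwitzEvenFEPair]

theorem thetaFEPair_f₀ : (thetaFEPair n).f₀ = 1 := by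
  simp [thetaFEPair, powFEPair, HurwitzZeta.hurwitzEvenFEPair]

theorem thetaFEPair_g₀ : (thetaFEPair n).g₀ = 1 := by
  simp [thetaFEPair, powFEPair, HurwitzZeta.hurwitzEvenFEPair]

theorem two_mul_thetaFEPair_k : 2 * ((thetaFEPair n).k : ℂ) = n := by
  rw [thetaFEPair_k]
  push_cast
  exact mul_div_cancel₀ _ two_ne_zero

theorem hasSum_thetaFEPair_sub {t : ℝ} (ht : 0 < t) :
    HasSum (fun k : Fin n → ℤ => if znorm k = 0 then 0 else
        (Real.exp (-Real.pi * znorm k ^ 2 * t) : ℂ))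
      ((thetaFEPair n).f t - (thetaFEPair n).f₀) := by
  have theta_pow := Complex.hasSum_ofReal.mpr (hasSum_exp_neg_pi_mul_znorm_sq n ht)
  convert! hasSum_ite_sub_hasSum theta_pow 0 using 1
  · simp only [znorm_eq_zero]
  · simp [thetaFEPair_f, thetaFEPair_f₀, znorm_eq_zero.mpr]

theorem epsteinZeta_zero : epsteinZeta n 0 = -1 := by
  rw [epsteinZeta, lFunctionOfFEPair_zero, thetaFEPair_f₀]

theorem differentiableAt_epsteinZeta {s : ℂ} (hs : s ≠ n) :
    DifferentiableAt ℂ (epsteinZeta n) s :=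
  differentiableAt_lFunctionOfFEPair _ (by rwa [two_mul_thetaFEPair_k])

theorem hasSum_epsteinZeta {s : ℂ} (hs : n < s.re) :
    HasSum (fun k : Fin n → ℤ => if k = 0 then 0 else ((znorm k : ℂ) ^ s)⁻¹)
      (epsteinZeta n s) := by
  have hs₀ : s ≠ 0 := by
    rintro rfl
    exact hs.not_ge (by simp)
  have abs_znorm (k : Fin n → ℤ) : |znorm k| = znorm k := abs_of_nonneg (znorm_nonneg k)
  have re_gt : 2 * (thetaFEPair n).k < s.re := by
    rw [thetaFEPair_k]
    linarith
  have summable : Summable fun k : Fin n → ℤ => ‖(1 : ℂ)‖ / |znorm k| ^ s.re := by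
    refine (summable_znorm_rpow (neg_lt_neg hs)).congr fun k => ?_
    rw [abs_znorm, norm_one, one_div, Real.rpow_neg (znorm_nonneg k)]
  have h := hasSum_lFunctionOfFEPair (thetaFEPair n) re_gt
    (fun t ht => by simpa only [one_mul] using hasSum_thetaFEPair_sub n ht) summable
  refine h.congr_fun fun k => ?_
  rw [abs_znorm, one_div]
  split_ifs with hk
  · rw [znorm_eq_zero.mpr hk, Complex.ofReal_zero, Complex.zero_cpow hs₀, inv_zero]
  · rfl

theorem inv_Gammaℝ_ofReal (x : ℝ) :
    (Complex.Gammaℝ x)⁻¹ = ((Real.pi ^ (x / 2) / Real.Gamma (x / 2) : ℝ) : ℂ) := by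
  rw [Complex.Gammaℝ_def, neg_div, Complex.cpow_neg, mul_inv, inv_inv, ← div_eq_mul_inv]
  push_cast [Complex.ofReal_cpow Real.pi_pos.le, ← Complex.Gamma_ofReal]
  rfl

theorem tendsto_sub_mul_epsteinZeta :
    Tendsto (fun s => (s - (n : ℂ)) * epsteinZeta n s) (𝓝[≠] (n : ℂ))
      (𝓝 ((2 * Real.pi ^ ((n : ℝ) / 2) / Real.Gamma ((n : ℝ) / 2) : ℝ) : ℂ)) := by
  have h := tendsto_sub_smul_lFunctionOfFEPair (thetaFEPair n)
  rw [two_mul_thetaFEPair_k, thetaFEPair_g₀, thetaFEPair_ε, mul_one, smul_eq_mul, mul_one,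
    div_eq_mul_inv, ← Complex.ofReal_natCast n, inv_Gammaℝ_ofReal] at h
  convert! h using 2
  push_cast
  ring

end Epstein

/-- **Proposition.** The Epstein zeta function `Zₙ(s) = Σ'_{k∈ℤⁿ} |k|^{−s}`
(convergent for `Re s > n`) extends meromorphically to `ℂ` with a single, simple
pole at `s = n`, of residue `2π^{n/2}/Γ(n/2)`, and its value at `0` is `Zₙ(0) = −1`. -/
theorem epstein_zeta_Zn (n : ℕ) (hn : 0 < n) :
    ∃ g : ℂ → ℂ,
      DifferentiableOn ℂ g {s : ℂ | s ≠ (n : ℂ)} ∧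
      (∀ s : ℂ, (n : ℝ) < s.re →
        HasSum (fun k : Fin n → ℤ =>
          if k = 0 then 0 else ((znorm k : ℂ) ^ s)⁻¹) (g s)) ∧
      Tendsto (fun s => (s - (n : ℂ)) * g s) (𝓝[≠] ((n : ℂ)))
        (𝓝 (((2 * Real.pi ^ ((n : ℝ) / 2) / Real.Gamma ((n : ℝ) / 2) : ℝ)) : ℂ)) ∧
      g 0 = -1 := by
  have : NeZero n := ⟨hn.ne'⟩
  exact ⟨epsteinZeta n,
    fun s hs => (differentiableAt_epsteinZeta n hs).differentiableWithinAt,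
    fun s hs => hasSum_epsteinZeta n hs,
    tendsto_sub_mul_epsteinZeta n,
    epsteinZeta_zero n⟩

end
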